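/- arXiv:math/0606734 — 2 statements merged into one kernel-verified Lean document; each statement's English description precedes it below -/
import Mathlib

section
/- Let n ≥ 2, let 0 < θ ≤ 2φ and 0 < φ ≤ π/2. Then A(n,θ,φ) ≤ A(n+1, ω(θ,φ)), where ω(θ,φ) = 2·arcsin(sin(θ/2)/sin φ); here A(n+1,·) refers to codes on the unit sphere S^n ⊂ ℝ^{n+1}. -/
noncomputable section

/-- The "North pole" `(0, …, 0, 1)` of the unit sphere in `ℝ^n`. -/
def north (n : ℕ) : EuclideanSpace ℝ (Fin n) :=
  if h : 0 < n then EuclideanSpace.single ⟨n - 1, Nat.sub_lt h Nat.one_pos⟩ 1 else 0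

/-- Angular distance between two points: `arccos ⟨x, y⟩`. -/
def aDist {n : ℕ} (x y : EuclideanSpace ℝ (Fin n)) : ℝ := Real.arccos (inner ℝ x y : ℝ)

/-- A finite set of unit vectors with pairwise angular distance at least `θ`. -/
def IsCode {n : ℕ} (θ : ℝ) (C : Finset (EuclideanSpace ℝ (Fin n))) : Prop :=
  (∀ x ∈ C, ‖x‖ = 1) ∧ ∀ x ∈ C, ∀ y ∈ C, x ≠ y → θ ≤ aDist x y

/-- `A(n, θ)`: maximal size of a `θ`-code on the unit sphere `S^{n-1} ⊂ ℝ^n`. -/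
def sphereMax (n : ℕ) (θ : ℝ) : ℕ :=
  sSup {M | ∃ C : Finset (EuclideanSpace ℝ (Fin n)), IsCode θ C ∧ C.card = M}

/-- `A(n, θ, φ)`: maximal size of a `θ`-code in the cap of angular radius `φ` about the
North pole. -/
def capMax (n : ℕ) (θ φ : ℝ) : ℕ :=
  sSup {M | ∃ C : Finset (EuclideanSpace ℝ (Fin n)), IsCode θ C ∧
    (∀ x ∈ C, aDist x (north n) ≤ φ) ∧ C.card = M}

/-- `A(n, θ, [ψ, φ])`: maximal size of a `θ`-code in the strip `Z(n, [ψ, φ])`. -/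
def stripMax (n : ℕ) (θ ψ φ : ℝ) : ℕ :=
  sSup {M | ∃ C : Finset (EuclideanSpace ℝ (Fin n)), IsCode θ C ∧
    (∀ x ∈ C, ψ ≤ aDist x (north n) ∧ aDist x (north n) ≤ φ) ∧ C.card = M}

/-- `m(n, d)`: maximal number of points in the closed unit ball of `ℝ^n` with pairwise
Euclidean distances at least `d`. -/
def ballMax (n : ℕ) (d : ℝ) : ℕ :=
  sSup {M | ∃ C : Finset (EuclideanSpace ℝ (Fin n)), (∀ x ∈ C, ‖x‖ ≤ 1) ∧
    (∀ x ∈ C, ∀ y ∈ C, x ≠ y → d ≤ dist x y) ∧ C.card = M}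

/-- `ω(θ, α, β) = arccos((cos θ - cos α cos β) / (sin α sin β))`. -/
def omega2 (θ α β : ℝ) : ℝ :=
  Real.arccos ((Real.cos θ - Real.cos α * Real.cos β) / (Real.sin α * Real.sin β))

/-- `ω(θ, α) := ω(θ, α, α)`. -/
def omega1 (θ α : ℝ) : ℝ := omega2 θ α α

end

/-!
Since `φ ≤ π / 2`, the cap of angular radius `φ` about `e` lies in the Euclidean ball of radius
`sin φ` about `cos φ • e`. Points at angular distance at least `θ` have Euclidean distance at least
`2 sin (θ / 2)`, so rescaling that ball to the unit ball gives points at distance at least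
`2 sin (θ / 2) / sin φ`. Finally, the unit ball of `ℝ^n` is the orthogonal projection of the upper
hemisphere of `S^n`; projections do not increase distances, so lifting the points to the hemisphere
keeps them at least as far apart, and the chord `2 r` corresponds to the angle `2 arcsin r`.
-/

section InnerProductSpace

open InnerProductGeometry Real

variable {E : Type*} [NormedAddCommGroup E] [InnerProductSpace ℝ E] {x y e : E} {φ : ℝ}

lemma dist_eq_two_mul_sin_half_angle (hx : ‖x‖ = 1) (hy : ‖y‖ = 1) :
    dist x y = 2 * sin (angle x y / 2) := by
  have sin_half_nonneg : 0 ≤ sin (angle x y / 2) :=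
    sin_nonneg_of_nonneg_of_le_pi (by linarith [angle_nonneg x y])
      (by linarith [angle_le_pi x y, pi_pos])
  have half_angle : cos (angle x y) = 1 - 2 * sin (angle x y / 2) ^ 2 := by
    rw [← cos_two_mul_eq_one_sub, mul_div_cancel₀ _ two_ne_zero]
  refine (sq_eq_sq₀ dist_nonneg (by positivity)).1 ?_
  rw [dist_eq_norm, norm_sub_sq_real, hx, hy, inner_eq_cos_angle_of_norm_eq_one hx hy, half_angle]
  ring

lemma angle_eq_two_mul_arcsin_half_dist (hx : ‖x‖ = 1) (hy : ‖y‖ = 1) :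
    angle x y = 2 * arcsin (dist x y / 2) := by
  rw [dist_eq_two_mul_sin_half_angle hx hy, mul_div_cancel_left₀ _ two_ne_zero,
    arcsin_sin (by linarith [angle_nonneg x y, pi_pos]) (by linarith [angle_le_pi x y])]
  ring

lemma two_mul_sin_half_le_dist {θ : ℝ} (hθ : 0 ≤ θ) (hx : ‖x‖ = 1) (hy : ‖y‖ = 1)
    (h : θ ≤ angle x y) : 2 * sin (θ / 2) ≤ dist x y := by
  rw [dist_eq_two_mul_sin_half_angle hx hy]
  gcongr 2 * ?_
  exact sin_le_sin_of_le_of_le_pi_div_two (by linarith [pi_pos]) (by linarith [angle_le_pi x y])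
    (by linarith)

lemma dist_cos_smul_le_sin (hφ : 0 ≤ φ) (hφ2 : φ ≤ π / 2) (hx : ‖x‖ = 1) (he : ‖e‖ = 1)
    (h : angle x e ≤ φ) : dist x (cos φ • e) ≤ sin φ := by
  have cos_nonneg : 0 ≤ cos φ := cos_nonneg_of_neg_pi_div_two_le_of_le (by linarith) hφ2
  have sin_nonneg : 0 ≤ sin φ := sin_nonneg_of_nonneg_of_le_pi hφ (by linarith)
  have cos_le_inner : cos φ ≤ inner ℝ x e := by
    rw [inner_eq_cos_angle_of_norm_eq_one hx he]
    exact cos_le_cos_of_nonneg_of_le_pi (angle_nonneg x e) (by linarith) h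
  refine (sq_le_sq₀ dist_nonneg sin_nonneg).1 ?_
  calc dist x (cos φ • e) ^ 2 = 1 - 2 * (cos φ * inner ℝ x e) + cos φ ^ 2 := by
        rw [dist_eq_norm, norm_sub_sq_real, inner_smul_right, norm_smul, hx, he, mul_one,
          norm_eq_abs, sq_abs, one_pow]
    _ ≤ 1 - 2 * (cos φ * cos φ) + cos φ ^ 2 := by gcongr
    _ = sin φ ^ 2 := by rw [sin_sq]; ring

end InnerProductSpace

section Separated

open Metric

lemma packingNumber_lt_top_of_totallyBounded {X : Type*} [PseudoEMetricSpace X] {A : Set X}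
    (hA : TotallyBounded A) {ε : NNReal} (hε : ε ≠ 0) : packingNumber ε A < ⊤ := by
  obtain ⟨t, -, ht, hcover⟩ := exists_finite_isCover_of_totallyBounded (half_pos hε.bot_lt).ne' hA
  calc packingNumber ε A = packingNumber (2 * (ε / 2)) A := by rw [mul_div_cancel₀ _ two_ne_zero]
    _ ≤ externalCoveringNumber (ε / 2) A := packingNumber_two_mul_le_externalCoveringNumber _ A
    _ ≤ t.encard := hcover.externalCoveringNumber_le_encard
    _ < ⊤ := ht.encard_lt_top

lemma exists_forall_card_le_of_pairwise_le_dist {X : Type*} [PseudoMetricSpace X] {A : Set X}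
    (hA : TotallyBounded A) {d : ℝ} (hd : 0 < d) :
    ∃ N : ℕ, ∀ C : Finset X, (C : Set X) ⊆ A →
      (C : Set X).Pairwise (fun x y ↦ d ≤ dist x y) → C.card ≤ N := by
  have hpos : 0 < (d / 2).toNNReal := Real.toNNReal_pos.2 (half_pos hd)
  have hfin := packingNumber_lt_top_of_totallyBounded hA hpos.ne'
  refine ⟨(packingNumber (d / 2).toNNReal A).toNat, fun C hCA hC ↦ ?_⟩
  -- `IsSeparated` asks for a strict inequality, hence the passage from `d` to `d / 2`.
  have hsep : IsSeparated (d / 2).toNNReal (C : Set X) := fun x hx y hy hxy ↦ by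
    change _ < edist x y
    rw [edist_dist, ← ENNReal.ofReal, ENNReal.ofReal_lt_ofReal_iff_of_nonneg (half_pos hd).le]
    exact (half_lt_self hd).trans_le (hC hx hy hxy)
  rw [← ENat.natCast_le_natCast, ENat.natCast_toNat hfin.ne, ← Set.encard_coe_eq_coe_finsetCard]
  exact hsep.encard_le_packingNumber hCA

end Separated

section MaximalCardinality

open InnerProductGeometry Real

variable {ι : Type*} {n : ℕ} {d θ : ℝ}

lemma aDist_eq_angle {x y : EuclideanSpace ℝ (Fin n)} (hx : ‖x‖ = 1) (hy : ‖y‖ = 1) :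
    aDist x y = angle x y := by
  rw [aDist, angle, hx, hy, mul_one, div_one]

lemma bddAbove_card_ball (n : ℕ) (hd : 0 < d) :
    BddAbove {M | ∃ C : Finset (EuclideanSpace ℝ (Fin n)), (∀ x ∈ C, ‖x‖ ≤ 1) ∧
      (∀ x ∈ C, ∀ y ∈ C, x ≠ y → d ≤ dist x y) ∧ C.card = M} := by
  obtain ⟨N, hN⟩ := exists_forall_card_le_of_pairwise_le_dist
    (isCompact_closedBall (0 : EuclideanSpace ℝ (Fin n)) 1).totallyBounded hd
  refine ⟨N, ?_⟩
  rintro _ ⟨C, hball, hsep, rfl⟩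
  exact hN C (fun x hx ↦ mem_closedBall_zero_iff.2 (hball x hx))
    fun x hx y hy hxy ↦ hsep x hx y hy hxy

lemma bddAbove_card_isCode (n : ℕ) (hθ : 0 < θ) :
    BddAbove {M | ∃ C : Finset (EuclideanSpace ℝ (Fin n)), IsCode θ C ∧ C.card = M} := by
  -- The chord `2 sin (θ / 2)` need not be positive for large `θ`.
  have hmin : 0 < min θ π := lt_min hθ pi_pos
  have hchord : 0 < 2 * sin (min θ π / 2) := mul_pos two_pos <|
    sin_pos_of_pos_of_lt_pi (by linarith) (by linarith [min_le_right θ π, pi_pos])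
  refine (bddAbove_card_ball n hchord).mono ?_
  rintro _ ⟨C, ⟨hunit, hangle⟩, rfl⟩
  refine ⟨C, fun x hx ↦ (hunit x hx).le, fun x hx y hy hxy ↦ ?_, rfl⟩
  refine two_mul_sin_half_le_dist hmin.le (hunit x hx) (hunit y hy) ?_
  rw [← aDist_eq_angle (hunit x hx) (hunit y hy)]
  exact (min_le_left θ π).trans (hangle x hx y hy hxy)

lemma card_le_ballMax (hd : 0 < d) {s : Finset ι} {f : ι → EuclideanSpace ℝ (Fin n)}
    (hball : ∀ i ∈ s, ‖f i‖ ≤ 1)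
    (hsep : (s : Set ι).Pairwise fun i j ↦ d ≤ dist (f i) (f j)) : s.card ≤ ballMax n d := by
  classical
  have hinj : (s : Set ι).InjOn f :=
    Set.injOn_iff_pairwise_ne.2 (hsep.mono' fun _ _ h ↦ dist_pos.1 (hd.trans_le h))
  refine le_csSup (bddAbove_card_ball n hd) ⟨s.image f, ?_, ?_, Finset.card_image_of_injOn hinj⟩
  · simpa only [Finset.forall_mem_image] using hball
  · simp only [Finset.forall_mem_image]
    exact fun i hi j hj hij ↦ hsep hi hj (ne_of_apply_ne f hij)

lemma card_le_sphereMax (hθ : 0 < θ) {s : Finset ι} {f : ι → EuclideanSpace ℝ (Fin n)}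
    (hunit : ∀ i ∈ s, ‖f i‖ = 1)
    (hangle : (s : Set ι).Pairwise fun i j ↦ θ ≤ aDist (f i) (f j)) : s.card ≤ sphereMax n θ := by
  classical
  have hinj : (s : Set ι).InjOn f := Set.injOn_iff_pairwise_ne.2 fun i hi j hj hij hfij ↦ by
    have angle_self : angle (f j) (f j) = 0 :=
      angle_self (ne_zero_of_norm_ne_zero (hunit j hj ▸ one_ne_zero))
    have hle : θ ≤ aDist (f i) (f j) := hangle hi hj hij
    rw [hfij, aDist_eq_angle (hunit j hj) (hunit j hj), angle_self] at hle
    exact hle.not_gt hθ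
  refine le_csSup (bddAbove_card_isCode n hθ)
    ⟨s.image f, ⟨?_, ?_⟩, Finset.card_image_of_injOn hinj⟩
  · simpa only [Finset.forall_mem_image] using hunit
  · simp only [Finset.forall_mem_image]
    exact fun i hi j hj hij ↦ hangle hi hj (ne_of_apply_ne f hij)

end MaximalCardinality

section CapToBall

open InnerProductGeometry Real

variable {n : ℕ} {θ φ : ℝ}

lemma norm_north (hn : 0 < n) : ‖north n‖ = 1 := by
  rw [north, dif_pos hn, PiLp.norm_single, norm_one]

lemma capMax_le_ballMax (hn : 0 < n) (hθ : 0 < θ) (hθ2 : θ < 2 * π) (hφ : 0 < φ)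
    (hφ2 : φ ≤ π / 2) : capMax n θ φ ≤ ballMax n (2 * (sin (θ / 2) / sin φ)) := by
  have hsinφ : 0 < sin φ := sin_pos_of_pos_of_lt_pi hφ (by linarith [pi_pos])
  have hsinθ : 0 < sin (θ / 2) := sin_pos_of_pos_of_lt_pi (by linarith) (by linarith)
  have he := norm_north hn
  refine csSup_le' ?_
  rintro _ ⟨C, ⟨hunit, hangle⟩, hcap, rfl⟩
  refine card_le_ballMax (f := fun x ↦ (sin φ)⁻¹ • (x - cos φ • north n)) (by positivity) ?_ ?_
  · intro x hx
    have hcap_x : angle x (north n) ≤ φ := aDist_eq_angle (hunit x hx) he ▸ hcap x hx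
    rw [norm_smul_of_nonneg (inv_nonneg.2 hsinφ.le), ← dist_eq_norm, inv_mul_le_one₀ hsinφ]
    exact dist_cos_smul_le_sin hφ.le hφ2 (hunit x hx) he hcap_x
  · intro x hx y hy hxy
    have hangle_xy : θ ≤ angle x y :=
      aDist_eq_angle (hunit x hx) (hunit y hy) ▸ hangle x hx y hy hxy
    calc 2 * (sin (θ / 2) / sin φ) = (sin φ)⁻¹ * (2 * sin (θ / 2)) := by ring
      _ ≤ (sin φ)⁻¹ * dist x y := by
        gcongr
        exact two_mul_sin_half_le_dist hθ.le (hunit x hx) (hunit y hy) hangle_xy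
      _ = dist ((sin φ)⁻¹ • (x - cos φ • north n)) ((sin φ)⁻¹ • (y - cos φ • north n)) := by
        rw [dist_smul₀, dist_sub_right, norm_inv, norm_of_nonneg hsinφ.le]

end CapToBall

section BallToSphere

open InnerProductGeometry Real

variable {n : ℕ}

/-- The point of the upper hemisphere of `S^n` above a point of the closed unit ball of `ℝ^n`; the
vertical coordinate is placed first. Outside the ball the square root is the junk value `0`. -/
noncomputable def hemisphereLift (a : EuclideanSpace ℝ (Fin n)) : EuclideanSpace ℝ (Fin (n + 1)) :=
  WithLp.toLp 2 (Fin.cons √(1 - ‖a‖ ^ 2) a)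

lemma norm_hemisphereLift {a : EuclideanSpace ℝ (Fin n)} (ha : ‖a‖ ≤ 1) :
    ‖hemisphereLift a‖ = 1 := by
  have hnonneg : 0 ≤ 1 - ‖a‖ ^ 2 := sub_nonneg.2 (pow_le_one₀ (norm_nonneg a) ha)
  refine (sq_eq_sq₀ (norm_nonneg _) zero_le_one).1 ?_
  calc ‖hemisphereLift a‖ ^ 2 = √(1 - ‖a‖ ^ 2) ^ 2 + ‖a‖ ^ 2 := by
        simp [hemisphereLift, EuclideanSpace.real_norm_sq_eq, Fin.sum_univ_succ]
    _ = 1 ^ 2 := by rw [sq_sqrt hnonneg]; ring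

lemma dist_le_dist_hemisphereLift (a b : EuclideanSpace ℝ (Fin n)) :
    dist a b ≤ dist (hemisphereLift a) (hemisphereLift b) := by
  refine (sq_le_sq₀ dist_nonneg dist_nonneg).1 ?_
  calc dist a b ^ 2 ≤ dist √(1 - ‖a‖ ^ 2) √(1 - ‖b‖ ^ 2) ^ 2 + dist a b ^ 2 :=
        le_add_of_nonneg_left (sq_nonneg _)
    _ = dist (hemisphereLift a) (hemisphereLift b) ^ 2 := by
        simp only [hemisphereLift, EuclideanSpace.dist_sq_eq, Fin.sum_univ_succ, Fin.cons_zero,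
          Fin.cons_succ]

lemma ballMax_le_sphereMax {r : ℝ} (hr : 0 < r) :
    ballMax n (2 * r) ≤ sphereMax (n + 1) (2 * arcsin r) := by
  refine csSup_le' ?_
  rintro _ ⟨C, hball, hsep, rfl⟩
  have hlift : (C : Set _).Pairwise fun a b ↦
      2 * r ≤ dist (hemisphereLift a) (hemisphereLift b) := fun a ha b hb hab ↦
    (hsep a ha b hb hab).trans (dist_le_dist_hemisphereLift a b)
  have hunit : ∀ a ∈ C, ‖hemisphereLift a‖ = 1 := fun a ha ↦ norm_hemisphereLift (hball a ha)
  refine card_le_sphereMax (mul_pos two_pos (arcsin_pos.2 hr)) hunit fun a ha b hb hab ↦ ?_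
  calc 2 * arcsin r ≤ 2 * arcsin (dist (hemisphereLift a) (hemisphereLift b) / 2) := by
        gcongr 2 * ?_
        exact monotone_arcsin (by linarith [hlift ha hb hab])
    _ = aDist (hemisphereLift a) (hemisphereLift b) := by
        rw [aDist_eq_angle (hunit a ha) (hunit b hb),
          angle_eq_two_mul_arcsin_half_dist (hunit a ha) (hunit b hb)]

end BallToSphere

theorem stmt2 (n : ℕ) (hn : 2 ≤ n) (θ φ : ℝ) (hθ : 0 < θ) (hθφ : θ ≤ 2 * φ)
    (hφ : 0 < φ) (hφ2 : φ ≤ Real.pi / 2) :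
    capMax n θ φ ≤ sphereMax (n + 1) (2 * Real.arcsin (Real.sin (θ / 2) / Real.sin φ)) := by
  have hr : 0 < Real.sin (θ / 2) / Real.sin φ :=
    div_pos (Real.sin_pos_of_pos_of_lt_pi (by linarith) (by linarith [Real.pi_pos]))
      (Real.sin_pos_of_pos_of_lt_pi hφ (by linarith [Real.pi_pos]))
  calc capMax n θ φ ≤ ballMax n (2 * (Real.sin (θ / 2) / Real.sin φ)) :=
        capMax_le_ballMax (by lia) hθ (by linarith [Real.pi_pos]) hφ hφ2
    _ ≤ sphereMax (n + 1) (2 * Real.arcsin (Real.sin (θ / 2) / Real.sin φ)) :=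
        ballMax_le_sphereMax hr
end

section
/- Let 0 < φ ≤ π/2 and φ < θ ≤ 2φ. Then for the sphere S² ⊂ ℝ³, A(3,θ,φ) = ⌊2π/ω(θ,φ)⌋. -/
/-! Put colatitude and longitude on the sphere with respect to the centre `e` of the cap. When the
angular radius `φ` is at most `π / 2` and `φ < θ`, pushing two points of the cap along their
meridians to the rim cannot bring them within `θ` of each other, if they were not before. So only
codes on the rim matter; there, by the spherical law of cosines, being `θ` apart on the sphere
means being `ω(θ, φ)` apart in longitude, and a circle holds exactly `⌊2π / ω⌋` such longitudes. -/

section Packing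

variable {G : Type*} [AddCommGroup G] [LinearOrder G] [IsOrderedAddMonoid G]

lemma card_nsmul_le_sub_of_pairwise_add_le {w a b : G} (hab : a ≤ b) (S : Finset G)
    (hS : ∀ s ∈ S, a ≤ s ∧ s + w ≤ b) (hsep : ∀ s ∈ S, ∀ t ∈ S, s < t → s + w ≤ t) :
    S.card • w ≤ b - a := by
  induction S using Finset.induction_on_max generalizing b with
  | empty => simpa using hab
  | insert x S hx ih =>
    have hxS : x ∉ S := fun h => (hx x h).false
    obtain ⟨hax, hxb⟩ := hS x (Finset.mem_insert_self x S)
    have below_x : S.card • w ≤ x - a :=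
      ih hax
        (fun s hs => ⟨(hS s (Finset.mem_insert_of_mem hs)).1,
          hsep s (Finset.mem_insert_of_mem hs) x (Finset.mem_insert_self x S) (hx s hs)⟩)
        fun s hs t ht => hsep s (Finset.mem_insert_of_mem hs) t (Finset.mem_insert_of_mem ht)
    calc (insert x S).card • w = S.card • w + w := by
          rw [Finset.card_insert_of_notMem hxS, succ_nsmul]
      _ ≤ x - a + w := by gcongr
      _ = x + w - a := by abel
      _ ≤ b - a := by gcongr

lemma card_nsmul_le_of_pairwise_cyclic {w p : G} (hp : 0 ≤ p) (hwp : w ≤ p) (S : Finset G)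
    (hsep : ∀ s ∈ S, ∀ t ∈ S, s < t → w ≤ t - s ∧ t - s ≤ p - w) :
    S.card • w ≤ p := by
  obtain rfl | hne := S.eq_empty_or_nonempty
  · simpa using hp
  set a := S.min' hne
  have fits_in_period : ∀ s ∈ S, a ≤ s ∧ s + w ≤ a + p := by
    intro s hs
    have has : a ≤ s := S.min'_le s hs
    refine ⟨has, ?_⟩
    obtain rfl | hlt := has.eq_or_lt
    · gcongr
    · have := (hsep a (S.min'_mem hne) s hs hlt).2
      rwa [sub_le_iff_le_add, sub_add_eq_add_sub, le_sub_iff_add_le, add_comm p] at this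
  simpa using card_nsmul_le_sub_of_pairwise_add_le (le_add_of_nonneg_right hp) S fits_in_period
    fun s hs t ht hst => le_sub_iff_add_le'.1 (hsep s hs t ht hst).1

end Packing

open Real

lemma cos_le_cos_iff_mem_Icc {w d : ℝ} (hw : w ∈ Set.Icc 0 π) (hd : d ∈ Set.Icc 0 (2 * π)) :
    cos d ≤ cos w ↔ d ∈ Set.Icc w (2 * π - w) := by
  obtain ⟨hw0, hwπ⟩ := hw
  obtain ⟨hd0, hd2π⟩ := hd
  rcases le_total d π with hdπ | hdπ
  · rw [strictAntiOn_cos.le_iff_ge ⟨hd0, hdπ⟩ ⟨hw0, hwπ⟩]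
    exact ⟨fun h => ⟨h, by linarith⟩, And.left⟩
  · rw [← cos_two_pi_sub d,
      strictAntiOn_cos.le_iff_ge ⟨by linarith, by linarith⟩ ⟨hw0, hwπ⟩]
    exact ⟨fun h => ⟨by linarith, by linarith⟩, fun h => by linarith [h.2]⟩

lemma card_mul_le_two_pi_of_pairwise_cos_sub_le {w : ℝ} (hw : w ∈ Set.Icc 0 π) (S : Finset ℝ)
    (hS : ∀ s ∈ S, s ∈ Set.Ioc (-π) π)
    (hsep : ∀ s ∈ S, ∀ t ∈ S, s ≠ t → cos (s - t) ≤ cos w) :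
    S.card * w ≤ 2 * π := by
  rw [← nsmul_eq_mul]
  refine card_nsmul_le_of_pairwise_cyclic two_pi_pos.le (by linarith [hw.2, pi_pos]) S
    fun s hs t ht hst => ?_
  have hd : t - s ∈ Set.Icc 0 (2 * π) :=
    ⟨by linarith, by linarith [(hS s hs).1, (hS t ht).2]⟩
  exact (cos_le_cos_iff_mem_Icc hw hd).1 (hsep t ht s hs hst.ne')

lemma sin_add_le_sin_add_sin {x y : ℝ} (hx : 0 ≤ sin x) (hy : 0 ≤ sin y) :
    sin (x + y) ≤ sin x + sin y := by
  rw [sin_add]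
  exact add_le_add (mul_le_of_le_one_right hx (cos_le_one y))
    (mul_le_of_le_one_left hy (cos_le_one x))

lemma min_le_mul_cos_add_mul_sin {φ α A B : ℝ} (hφ : 0 < φ) (hφ2 : φ ≤ π / 2)
    (hα : α ∈ Set.Icc 0 φ) (hA : 0 ≤ A) :
    min A (A * cos φ + B * sin φ) ≤ A * cos α + B * sin α := by
  obtain ⟨hα0, hαφ⟩ := hα
  have hsin : 0 < sin φ := sin_pos_of_pos_of_lt_pi hφ (by linarith [pi_pos])
  have hsin_α : 0 ≤ sin α := sin_nonneg_of_nonneg_of_le_pi hα0 (by linarith)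
  have hsin_sub : 0 ≤ sin (φ - α) :=
    sin_nonneg_of_nonneg_of_le_pi (by linarith) (by linarith)
  set V := A * cos φ + B * sin φ with hV
  set m := min A V
  have interpolation : sin φ * (A * cos α + B * sin α) = sin (φ - α) * A + sin α * V := by
    rw [sin_sub, hV]
    ring
  refine le_of_mul_le_mul_left ?_ hsin
  rw [interpolation]
  rcases le_total 0 m with hm | hm
  · calc sin φ * m ≤ (sin (φ - α) + sin α) * m := by
          gcongr
          simpa using sin_add_le_sin_add_sin hsin_sub hsin_α
      _ = sin (φ - α) * m + sin α * m := add_mul _ _ _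
      _ ≤ sin (φ - α) * A + sin α * V := by
          gcongr
          exacts [min_le_left A V, min_le_right A V]
  · calc sin φ * m ≤ sin α * m :=
          mul_le_mul_of_nonpos_right
            (sin_le_sin_of_le_of_le_pi_div_two (by linarith) hφ2 hαφ) hm
      _ ≤ sin α * V := by
          gcongr
          exact min_le_right A V
      _ ≤ sin (φ - α) * A + sin α * V := le_add_of_nonneg_left (mul_nonneg hsin_sub hA)

-- By the spherical law of cosines: a triangle with legs at most `φ` and fixed angle between them
-- has its third side at most `φ` or at most what it is when both legs equal `φ`.
lemma min_cos_le_cos_mul_cos_add_sin_mul_sin_mul {φ α β : ℝ} (hφ : 0 < φ) (hφ2 : φ ≤ π / 2)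
    (hα : α ∈ Set.Icc 0 φ) (hβ : β ∈ Set.Icc 0 φ) (g : ℝ) :
    min (cos φ) (cos φ * cos φ + sin φ * sin φ * g) ≤ cos α * cos β + sin α * sin β * g := by
  have hcos : 0 ≤ cos φ := cos_nonneg_of_neg_pi_div_two_le_of_le (by linarith) hφ2
  have hcos_β : cos φ ≤ cos β := cos_le_cos_of_nonneg_of_le_pi hβ.1 (by linarith) hβ.2
  have move_β : min (cos φ) (cos φ * cos φ + sin φ * sin φ * g) ≤
      cos β * cos φ + sin β * g * sin φ := by
    convert min_le_mul_cos_add_mul_sin (B := sin φ * g) hφ hφ2 hβ hcos using 2 <;> ring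
  have move_α : min (cos β) (cos β * cos φ + sin β * g * sin φ) ≤
      cos β * cos α + sin β * g * sin α :=
    min_le_mul_cos_add_mul_sin hφ hφ2 hα (hcos.trans hcos_β)
  calc min (cos φ) (cos φ * cos φ + sin φ * sin φ * g)
      ≤ min (cos β) (cos β * cos φ + sin β * g * sin φ) :=
        le_min ((min_le_left _ _).trans hcos_β) move_β
    _ ≤ cos β * cos α + sin β * g * sin α := move_α
    _ = cos α * cos β + sin α * sin β * g := by ring

lemma cos_aDist {n : ℕ} {x y : EuclideanSpace ℝ (Fin n)} (hx : ‖x‖ = 1) (hy : ‖y‖ = 1) :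
    cos (aDist x y) = inner ℝ x y :=
  cos_arccos (neg_one_le_real_inner_of_norm_eq_one hx hy) (real_inner_le_one_of_norm_eq_one hx hy)

lemma le_aDist_iff_inner_le_cos {n : ℕ} {θ : ℝ} (hθ : θ ∈ Set.Icc 0 π)
    {x y : EuclideanSpace ℝ (Fin n)} (hx : ‖x‖ = 1) (hy : ‖y‖ = 1) :
    θ ≤ aDist x y ↔ inner ℝ x y ≤ cos θ := by
  rw [← cos_aDist hx hy]
  exact (strictAntiOn_cos.le_iff_ge ⟨arccos_nonneg _, arccos_le_pi _⟩ hθ).symm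

lemma aDist_self {n : ℕ} {x : EuclideanSpace ℝ (Fin n)} (hx : ‖x‖ = 1) : aDist x x = 0 := by
  rw [aDist, real_inner_self_eq_norm_sq, hx, one_pow, arccos_one]

section Family

variable {n : ℕ} {ι : Type*} {θ : ℝ} {s : Finset ι} {p : ι → EuclideanSpace ℝ (Fin n)}

lemma isCode_image (hp : ∀ i ∈ s, ‖p i‖ = 1)
    (hsep : (s : Set ι).Pairwise fun i j => θ ≤ aDist (p i) (p j)) : IsCode θ (s.image p) := by
  simp only [IsCode, Finset.forall_mem_image]
  exact ⟨hp, fun i hi j hj hij => hsep hi hj (ne_of_apply_ne p hij)⟩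

lemma injOn_of_pairwise_le_aDist (hθ : 0 < θ) (hp : ∀ i ∈ s, ‖p i‖ = 1)
    (hsep : (s : Set ι).Pairwise fun i j => θ ≤ aDist (p i) (p j)) : Set.InjOn p s := by
  intro i hi j hj hij
  by_contra hne
  have : θ ≤ aDist (p i) (p j) := hsep hi hj hne
  rw [← hij, aDist_self (hp i hi)] at this
  exact hθ.not_ge this

end Family

lemma aDist_north_three (x : EuclideanSpace ℝ (Fin 3)) : aDist x (north 3) = arccos (x 2) := by
  simp [aDist, north, EuclideanSpace.inner_single_right]

/-- The point of the unit sphere of `ℝ³` with colatitude `α` (the angular distance to `north 3`)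
and longitude `γ`. -/
noncomputable def sphericalPoint (α γ : ℝ) : EuclideanSpace ℝ (Fin 3) :=
  !₂[sin α * cos γ, sin α * sin γ, cos α]

/-- The longitude of a point of `ℝ³`, normalized to `(-π, π]`; it is `0` on the axis through
`north 3`, by the convention `Complex.arg 0 = 0`. -/
noncomputable def longitude (x : EuclideanSpace ℝ (Fin 3)) : ℝ :=
  Complex.arg ⟨x 0, x 1⟩

lemma inner_sphericalPoint (α β γ δ : ℝ) :
    inner ℝ (sphericalPoint α γ) (sphericalPoint β δ) =
      cos α * cos β + sin α * sin β * cos (γ - δ) := by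
  simp only [sphericalPoint, PiLp.inner_apply, RCLike.inner_apply, ringHom_apply,
    Fin.sum_univ_three, Fin.isValue, Matrix.cons_val_zero, Matrix.cons_val_one, Matrix.cons_val,
    cos_sub]
  ring

lemma norm_sphericalPoint (α γ : ℝ) : ‖sphericalPoint α γ‖ = 1 := by
  rw [norm_eq_sqrt_real_inner, inner_sphericalPoint, sub_self, cos_zero, mul_one, ← sq, ← sq,
    cos_sq_add_sin_sq, sqrt_one]

lemma aDist_sphericalPoint_north {α : ℝ} (hα : α ∈ Set.Icc 0 π) (γ : ℝ) :
    aDist (sphericalPoint α γ) (north 3) = α := by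
  simp [aDist_north_three, sphericalPoint, arccos_cos hα.1 hα.2]

lemma sphericalPoint_aDist_longitude {x : EuclideanSpace ℝ (Fin 3)} (hx : ‖x‖ = 1) :
    sphericalPoint (aDist x (north 3)) (longitude x) = x := by
  have hsq : x 0 ^ 2 + x 1 ^ 2 + x 2 ^ 2 = 1 := by
    simpa [EuclideanSpace.norm_sq_eq, Fin.sum_univ_three, hx] using
      (EuclideanSpace.norm_sq_eq x).symm
  have hnorm : sin (arccos (x 2)) = ‖(⟨x 0, x 1⟩ : ℂ)‖ := by
    rw [sin_arccos, Complex.norm_def, Complex.normSq_mk]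
    congr 1
    linarith
  have hcos : cos (arccos (x 2)) = x 2 := by
    apply cos_arccos <;> nlinarith [sq_nonneg (x 0), sq_nonneg (x 1)]
  rw [aDist_north_three]
  ext i
  fin_cases i <;>
    simp [sphericalPoint, longitude, hnorm, hcos, Complex.norm_mul_cos_arg,
      Complex.norm_mul_sin_arg]

lemma le_aDist_rim_of_le_aDist {θ φ : ℝ} (hφ : 0 < φ) (hφ2 : φ ≤ π / 2) (hφθ : φ < θ)
    (hθ : θ ≤ π) {x y : EuclideanSpace ℝ (Fin 3)} (hx : ‖x‖ = 1) (hy : ‖y‖ = 1)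
    (hxφ : aDist x (north 3) ≤ φ) (hyφ : aDist y (north 3) ≤ φ) (hxy : θ ≤ aDist x y) :
    θ ≤ aDist (sphericalPoint φ (longitude x)) (sphericalPoint φ (longitude y)) := by
  have hθ' : θ ∈ Set.Icc 0 π := ⟨(hφ.trans hφθ).le, hθ⟩
  have hcos : cos θ < cos φ := cos_lt_cos_of_nonneg_of_le_pi hφ.le hθ hφθ
  rw [le_aDist_iff_inner_le_cos hθ' hx hy, ← sphericalPoint_aDist_longitude hx,
    ← sphericalPoint_aDist_longitude hy, inner_sphericalPoint] at hxy
  rw [le_aDist_iff_inner_le_cos hθ' (norm_sphericalPoint _ _) (norm_sphericalPoint _ _),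
    inner_sphericalPoint]
  have hmin := (min_cos_le_cos_mul_cos_add_sin_mul_sin_mul hφ hφ2 ⟨arccos_nonneg _, hxφ⟩
    ⟨arccos_nonneg _, hyφ⟩ (cos (longitude x - longitude y))).trans hxy
  exact (min_le_iff.1 hmin).resolve_left hcos.not_ge

lemma omega1_mem_Icc (θ φ : ℝ) : omega1 θ φ ∈ Set.Icc 0 π :=
  ⟨arccos_nonneg _, arccos_le_pi _⟩

lemma omega1_pos {θ φ : ℝ} (hφ : sin φ ≠ 0) (hθ : cos θ < 1) : 0 < omega1 θ φ := by
  have hsin : 0 < sin φ * sin φ := mul_self_pos.2 hφ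
  rw [omega1, omega2, arccos_pos, div_lt_one hsin]
  linarith [sin_sq_add_cos_sq φ, sq (sin φ), sq (cos φ)]

lemma cos_sq_add_sin_sq_mul_cos_omega1 {θ φ : ℝ} (hφ : sin φ ≠ 0) (hθ : cos (2 * φ) ≤ cos θ) :
    cos φ * cos φ + sin φ * sin φ * cos (omega1 θ φ) = cos θ := by
  have hsin : 0 < sin φ * sin φ := mul_self_pos.2 hφ
  have hone : sin φ * sin φ + cos φ * cos φ = 1 := by simpa only [sq] using sin_sq_add_cos_sq φ
  rw [cos_two_mul, sq] at hθ
  rw [omega1, omega2, cos_arccos, mul_div_cancel₀ _ hsin.ne', add_sub_cancel]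
  · rw [le_div_iff₀ hsin]
    linarith
  · rw [div_le_iff₀ hsin]
    linarith [cos_le_one θ]

lemma le_aDist_rim_iff {θ φ : ℝ} (hφ : sin φ ≠ 0) (hθ : θ ∈ Set.Icc 0 π)
    (hθφ : cos (2 * φ) ≤ cos θ) (γ δ : ℝ) :
    θ ≤ aDist (sphericalPoint φ γ) (sphericalPoint φ δ) ↔ cos (γ - δ) ≤ cos (omega1 θ φ) := by
  rw [le_aDist_iff_inner_le_cos hθ (norm_sphericalPoint _ _) (norm_sphericalPoint _ _),
    inner_sphericalPoint, ← cos_sq_add_sin_sq_mul_cos_omega1 hφ hθφ, add_le_add_iff_left,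
    mul_le_mul_iff_right₀ (mul_self_pos.2 hφ)]

lemma cos_natCast_mul_sub_le {w : ℝ} (hw : w ∈ Set.Icc 0 π) {N : ℕ} (hN : N * w ≤ 2 * π)
    {i j : ℕ} (hi : i < N) (hj : j < N) (hij : i ≠ j) : cos (i * w - j * w) ≤ cos w := by
  wlog hlt : j < i generalizing i j
  · rw [← cos_neg, neg_sub]
    exact this hj hi hij.symm (hij.lt_or_gt.resolve_right hlt)
  have hgap : w ≤ i * w - j * w := by
    have : (j : ℝ) + 1 ≤ i := by exact_mod_cast hlt
    nlinarith [hw.1]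
  have hwrap : i * w - j * w ≤ 2 * π - w := by
    have : (i : ℝ) + 1 ≤ N := by exact_mod_cast hi
    nlinarith [hw.1, mul_nonneg j.cast_nonneg hw.1]
  exact (cos_le_cos_iff_mem_Icc hw ⟨by linarith [hw.1], by linarith [hw.1]⟩).2 ⟨hgap, hwrap⟩

lemma exists_isCode_cap_card_eq {θ φ : ℝ} (hφ : 0 < φ) (hφ2 : φ ≤ π / 2) (hθ : 0 < θ)
    (hθφ : θ ≤ 2 * φ) {N : ℕ} (hN : N * omega1 θ φ ≤ 2 * π) :
    ∃ C : Finset (EuclideanSpace ℝ (Fin 3)), IsCode θ C ∧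
      (∀ x ∈ C, aDist x (north 3) ≤ φ) ∧ C.card = N := by
  have hsin : sin φ ≠ 0 := (sin_pos_of_pos_of_lt_pi hφ (by linarith)).ne'
  have hcos : cos (2 * φ) ≤ cos θ := cos_le_cos_of_nonneg_of_le_pi hθ.le (by linarith) hθφ
  let p : ℕ → EuclideanSpace ℝ (Fin 3) := fun k => sphericalPoint φ (k * omega1 θ φ)
  have hp : ∀ k ∈ Finset.range N, ‖p k‖ = 1 := fun k _ => norm_sphericalPoint _ _
  have hsep : (Finset.range N : Set ℕ).Pairwise fun i j => θ ≤ aDist (p i) (p j) :=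
    fun i hi j hj hij => (le_aDist_rim_iff hsin ⟨hθ.le, by linarith⟩ hcos _ _).2 <|
      cos_natCast_mul_sub_le (omega1_mem_Icc θ φ) hN (Finset.mem_range.1 hi)
        (Finset.mem_range.1 hj) hij
  refine ⟨(Finset.range N).image p, isCode_image hp hsep, ?_, ?_⟩
  · exact Finset.forall_mem_image.2 fun k _ =>
      (aDist_sphericalPoint_north ⟨hφ.le, by linarith⟩ _).le
  · rw [Finset.card_image_of_injOn (injOn_of_pairwise_le_aDist hθ hp hsep), Finset.card_range]

lemma IsCode.card_mul_omega1_le {θ φ : ℝ} (hφ : 0 < φ) (hφ2 : φ ≤ π / 2) (hφθ : φ < θ)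
    (hθφ : θ ≤ 2 * φ) {C : Finset (EuclideanSpace ℝ (Fin 3))} (hC : IsCode θ C)
    (hcap : ∀ x ∈ C, aDist x (north 3) ≤ φ) : C.card * omega1 θ φ ≤ 2 * π := by
  have hsin : sin φ ≠ 0 := (sin_pos_of_pos_of_lt_pi hφ (by linarith)).ne'
  have hθ : 0 < θ := hφ.trans hφθ
  have hcos : cos (2 * φ) ≤ cos θ := cos_le_cos_of_nonneg_of_le_pi hθ.le (by linarith) hθφ
  obtain ⟨hunit, hdist⟩ := hC
  have hrim : (C : Set (EuclideanSpace ℝ (Fin 3))).Pairwise fun x y =>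
      θ ≤ aDist (sphericalPoint φ (longitude x)) (sphericalPoint φ (longitude y)) :=
    fun x hx y hy hxy => le_aDist_rim_of_le_aDist hφ hφ2 hφθ (by linarith) (hunit x hx)
      (hunit y hy) (hcap x hx) (hcap y hy) (hdist x hx y hy hxy)
  have hinj : Set.InjOn longitude (C : Set (EuclideanSpace ℝ (Fin 3))) :=
    .of_comp (g := sphericalPoint φ)
      (injOn_of_pairwise_le_aDist hθ (fun _ _ => norm_sphericalPoint _ _) hrim)
  rw [← Finset.card_image_of_injOn hinj]
  apply card_mul_le_two_pi_of_pairwise_cos_sub_le (omega1_mem_Icc θ φ)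
  · exact Finset.forall_mem_image.2 fun x _ => Complex.arg_mem_Ioc _
  · simp only [Finset.forall_mem_image]
    exact fun x hx y hy hne => (le_aDist_rim_iff hsin ⟨hθ.le, by linarith⟩ hcos _ _).1
      (hrim hx hy (ne_of_apply_ne longitude hne))

theorem stmt7 (θ φ : ℝ) (hφ : 0 < φ) (hφ2 : φ ≤ Real.pi / 2) (h1 : φ < θ)
    (h2 : θ ≤ 2 * φ) :
    capMax 3 θ φ = ⌊2 * Real.pi / omega1 θ φ⌋₊ := by
  have hsin : sin φ ≠ 0 := (sin_pos_of_pos_of_lt_pi hφ (by linarith [pi_pos])).ne'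
  have hθ : cos θ < 1 := (cos_lt_cos_of_nonneg_of_le_pi hφ.le (by linarith) h1).trans_le
    (cos_le_one φ)
  have hω : 0 < omega1 θ φ := omega1_pos hsin hθ
  refine IsGreatest.csSup_eq ⟨?_, ?_⟩
  · exact exists_isCode_cap_card_eq hφ hφ2 (hφ.trans h1) h2
      ((le_div_iff₀ hω).1 (Nat.floor_le (by positivity)))
  · rintro _ ⟨C, hC, hcap, rfl⟩
    exact Nat.le_floor ((le_div_iff₀ hω).2 (hC.card_mul_omega1_le hφ hφ2 h1 h2 hcap))
end
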